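/- arXiv:1907.02308 — 2 statements merged into one kernel-verified Lean document; each statement's English description precedes it below -/
import Mathlib

section
/- Let Σ be a finite alphabet with |Σ| ≥ 2 and let K = (π_0, π_1, …, π_{k−1}) be a tuple of linear orders on Σ with π_0 = Id. If there exists an index i with 0 ≤ i ≤ k−3 such that π_i = Id, π_{i+1} = Rev and π_{i+2} ≠ Id, then BWT_K is not rank-invertible. -/
namespace Paper

variable {α : Type*}

/-- A word is primitive if its cyclic rotations are pairwise distinct. -/
def Primitive (w : List α) : Prop :=
  ∀ i j, i < w.length → j < w.length → w.rotate i = w.rotate j → i = j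

/-- Generalized lexicographic strict order on equal-length words determined by a
sequence `σ` of strict orders, one per position (`σ d` is used at position `d`). -/
def KLt (σ : ℕ → α → α → Prop) : ℕ → List α → List α → Prop
  | _, [], _ => False
  | _, _ :: _, [] => False
  | d, a :: x, b :: y => σ d a b ∨ (a = b ∧ KLt σ (d + 1) x y)

/-- Rank-invertibility of the generalized BWT determined by the sequence of
per-position strict orders `σ`: there is a function `f` computing `LF i` from
the Parikh vector of the last column `L`, the symbol `L i`, and the number of
occurrences of `L i` in `L[0..i]`. -/
def RankInvertible [LinearOrder α] (σ : ℕ → α → α → Prop) : Prop :=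
  ∃ f : (α → ℕ) → α → ℕ → ℕ,
    ∀ (n : ℕ) (w : List α), w.length = n → Primitive w →
      ∀ (rows : Fin n → List α) (L : Fin n → α) (LF : Fin n → Fin n),
        (∀ j : Fin n, ∃ i : Fin n, rows i = w.rotate j.val) →
        (∀ i j : Fin n, i < j → KLt σ 0 (rows i) (rows j)) →
        (∀ i, (rows i).getLast? = some (L i)) →
        (∀ i, rows (LF i) = (rows i).rotate ((rows i).length - 1)) →
        ∀ i : Fin n, (LF i : ℕ) =
          f (fun c => (List.ofFn L).count c) (L i)
            (((List.ofFn L).take (i.val + 1)).count (L i))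

theorem KLt_irrefl {σ : ℕ → α → α → Prop} (hσ : ∀ d, IsStrictTotalOrder α (σ d)) :
    ∀ (x : List α) (d : ℕ), ¬ KLt σ d x x
  | [], _ => by simp [KLt]
  | a :: x, d => by
    have := hσ d
    rintro (h | ⟨_, h⟩)
    · exact irrefl_of (σ d) a h
    · exact KLt_irrefl hσ x _ h

theorem KLt_trans {σ : ℕ → α → α → Prop} (hσ : ∀ d, IsStrictTotalOrder α (σ d)) :
    ∀ (x y z : List α) (d : ℕ), KLt σ d x y → KLt σ d y z → KLt σ d x z
  | [], _, _, _ => by simp [KLt]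
  | _ :: _, [], _, _ => by simp [KLt]
  | _ :: _, _ :: _, [], _ => by simp [KLt]
  | a :: x, b :: y, c :: z, d => by
    have := hσ d
    rintro (h | ⟨rfl, h⟩) (h' | ⟨rfl, h'⟩)
    · exact Or.inl (trans_of (σ d) h h')
    · exact Or.inl h
    · exact Or.inl h'
    · exact Or.inr ⟨rfl, KLt_trans hσ x y z _ h h'⟩

theorem KLt_total {σ : ℕ → α → α → Prop} (hσ : ∀ d, IsStrictTotalOrder α (σ d)) :
    ∀ (x y : List α) (d : ℕ), x.length = y.length → KLt σ d x y ∨ x = y ∨ KLt σ d y x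
  | [], [], _, _ => by simp
  | _ :: _, [], _, h => by simp at h
  | [], _ :: _, _, h => by simp at h
  | a :: x, b :: y, d, h => by
    have := hσ d
    rcases trichotomous_of (σ d) a b with h1 | rfl | h1
    · exact Or.inl (Or.inl h1)
    · rcases KLt_total hσ x y (d + 1) (by simpa using h) with h2 | rfl | h2
      · exact Or.inl (Or.inr ⟨rfl, h2⟩)
      · simp
      · exact Or.inr (Or.inr (Or.inr ⟨rfl, h2⟩))
    · exact Or.inr (Or.inr (Or.inl h1))

theorem KLt_replicate {σ : ℕ → α → α → Prop} (b : α) (x y : List α) :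
    ∀ (p d : ℕ), KLt σ (d + p) x y →
      KLt σ d (List.replicate p b ++ x) (List.replicate p b ++ y)
  | 0, d, h => by simpa using h
  | p + 1, d, h => by
    rw [List.replicate_succ, List.cons_append, List.cons_append]
    refine Or.inr ⟨rfl, KLt_replicate b x y p (d + 1) ?_⟩
    rwa [show d + 1 + p = d + (p + 1) by omega]

theorem exists_sort {ι : Type*} [Fintype ι] (r : ι → ι → Prop) (hr : IsStrictTotalOrder ι r)
    (n : ℕ) (hn : Fintype.card ι = n) :
    ∃ e : Fin n ≃ ι, ∀ i j, i < j → r (e i) (e j) := by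
  classical
  letI : LinearOrder ι := linearOrderOfSTO r
  let e := monoEquivOfFin ι hn
  refine ⟨e.toEquiv, fun i j h => ?_⟩
  have h2 : e i < e j := e.lt_iff_lt.2 h
  exact h2

theorem key [LinearOrder α] {σ : ℕ → α → α → Prop} (hσ : ∀ d, IsStrictTotalOrder α (σ d))
    (f : (α → ℕ) → α → ℕ → ℕ)
    (hf : ∀ (n : ℕ) (w : List α), w.length = n → Primitive w →
      ∀ (rows : Fin n → List α) (L : Fin n → α) (LF : Fin n → Fin n),
        (∀ j : Fin n, ∃ i : Fin n, rows i = w.rotate j.val) →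
        (∀ i j : Fin n, i < j → KLt σ 0 (rows i) (rows j)) →
        (∀ i, (rows i).getLast? = some (L i)) →
        (∀ i, rows (LF i) = (rows i).rotate ((rows i).length - 1)) →
        ∀ i : Fin n, (LF i : ℕ) =
          f (fun c => (List.ofFn L).count c) (L i)
            (((List.ofFn L).take (i.val + 1)).count (L i)))
    (w : List α) (hw : Primitive w) (a : α) (ha : w.count a = 2) (u v : List α)
    (j1 j2 : ℕ) (h1 : j1 < w.length) (h2 : j2 < w.length)
    (hu : w.rotate j1 = u ++ [a]) (hv : w.rotate j2 = v ++ [a])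
    (huv : KLt σ 0 (u ++ [a]) (v ++ [a])) :
    (KLt σ 0 (a :: u) (a :: v) → f (fun c => w.count c) a 1 < f (fun c => w.count c) a 2) ∧
    (KLt σ 0 (a :: v) (a :: u) → f (fun c => w.count c) a 2 < f (fun c => w.count c) a 1) := by
  obtain ⟨n, hn⟩ : ∃ n, w.length = n := ⟨_, rfl⟩
  have hn0 : 0 < n := by omega
  rw [hn] at h1 h2
  obtain ⟨e, he⟩ := exists_sort
    (fun x y : Fin n => KLt σ 0 (w.rotate x.val) (w.rotate y.val))
    { irrefl := fun x => KLt_irrefl hσ _ _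
      trans := fun x y z => KLt_trans hσ _ _ _ _
      trichotomous := fun x y hxy hyx => by
        rcases KLt_total hσ (w.rotate x.val) (w.rotate y.val) 0 (by simp) with h | h | h
        · exact absurd h hxy
        · exact Fin.ext (hw _ _ (by omega) (by omega) h)
        · exact absurd h hyx }
    n (by simp)
  let rows : Fin n → List α := fun i => w.rotate (e i).val
  let pr : Fin n → Fin n := fun j => ⟨(j.val + (n - 1)) % n, Nat.mod_lt _ hn0⟩
  let g : Fin n → α := fun j => w[(pr j).val]'(by rw [hn]; exact (pr j).isLt)
  let L : Fin n → α := g ∘ e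
  let LF : Fin n → Fin n := fun i => e.symm (pr (e i))
  have hlen : ∀ i, (rows i).length = n := fun i => by simp [rows, hn]
  have hrot : ∀ i, rows (LF i) = (rows i).rotate ((rows i).length - 1) := by
    intro i
    rw [hlen]
    simp only [rows, LF, pr, Equiv.apply_symm_apply, List.rotate_rotate]
    have hm := List.rotate_mod w ((e i).val + (n - 1))
    rwa [hn] at hm
  have hlast : ∀ i, (rows i).getLast? = some (L i) := by
    intro i
    rw [List.getLast?_eq_getElem?, hlen, List.getElem?_eq_getElem (by rw [hlen]; omega)]
    simp only [rows, L, g, pr, Function.comp, List.getElem_rotate]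
    congr 2
    rw [hn, Nat.add_comm]
  have hmono : ∀ x y, KLt σ 0 (rows x) (rows y) → x < y := by
    intro x y h
    rcases lt_trichotomy x y with h' | rfl | h'
    · exact h'
    · exact absurd h (KLt_irrefl hσ _ _)
    · exact absurd (KLt_trans hσ _ _ _ _ h (he _ _ h')) (KLt_irrefl hσ _ _)
  have hcount : ∀ c, (List.ofFn L).count c = w.count c := by
    intro c
    have p1 : (List.ofFn L).Perm (List.ofFn g) := Equiv.Perm.ofFn_comp_perm e g
    have p2 : List.ofFn g = w.rotate (n - 1) := by
      apply List.ext_getElem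
      · simp [hn]
      · intro k hk1 hk2
        simp only [List.getElem_ofFn, g, pr, List.getElem_rotate, hn]
    rw [p1.count_eq, p2, (List.rotate_perm w (n - 1)).count_eq]
  have main := hf n w hn hw rows L LF
    (fun j => ⟨e.symm j, by simp [rows]⟩) (fun i j h => he i j h) hlast hrot
  simp only [hcount] at main
  let i1 := e.symm ⟨j1, h1⟩
  let i2 := e.symm ⟨j2, h2⟩
  have r1 : rows i1 = u ++ [a] := by simp [rows, i1, hu]
  have r2 : rows i2 = v ++ [a] := by simp [rows, i2, hv]
  have l1 : L i1 = a := by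
    have := hlast i1; rw [r1] at this; simpa using this.symm
  have l2 : L i2 = a := by
    have := hlast i2; rw [r2] at this; simpa using this.symm
  have h12 : i1 < i2 := hmono _ _ (by rw [r1, r2]; exact huv)
  have R1 : rows (LF i1) = a :: u := by
    rw [hrot, r1]; simp [List.rotate_append_length_eq]
  have R2 : rows (LF i2) = a :: v := by
    rw [hrot, r2]; simp [List.rotate_append_length_eq]
  have tk : ∀ i : Fin n, L i = a → ((List.ofFn L).take (i.val + 1)).count a
      = ((List.ofFn L).take i.val).count a + 1 := by
    intro i hi
    rw [List.take_add_one, List.count_append]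
    simp [hi]
  have t1 := tk i1 l1
  have t2 := tk i2 l2
  have t3 : ((List.ofFn L).take (i1.val + 1)).count a ≤ ((List.ofFn L).take i2.val).count a :=
    (List.take_sublist_take_left (by exact h12)).count_le a
  have t4 : ((List.ofFn L).take (i2.val + 1)).count a ≤ 2 := by
    rw [← ha, ← hcount a]
    exact (List.take_sublist _ _).count_le a
  have c1 : ((List.ofFn L).take (i1.val + 1)).count a = 1 := by omega
  have c2 : ((List.ofFn L).take (i2.val + 1)).count a = 2 := by omega
  have m1 := main i1
  have m2 := main i2
  rw [l1, c1] at m1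
  rw [l2, c2] at m2
  rw [← m1, ← m2]
  constructor
  · intro h
    exact hmono _ _ (by rw [R1, R2]; exact h)
  · intro h
    exact hmono _ _ (by rw [R1, R2]; exact h)

/-- The word `a b^p a b^q`. -/
def wd (a b : α) (p q : ℕ) : List α :=
  a :: (List.replicate p b ++ a :: List.replicate q b)

theorem wd_length (a b : α) (p q : ℕ) : (wd a b p q).length = p + q + 2 := by
  simp [wd]; omega

theorem wd_get {a b : α} (hab : a ≠ b) (p q k : ℕ) (hk : k < (wd a b p q).length) :
    (wd a b p q)[k] = a ↔ k = 0 ∨ k = p + 1 := by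
  rcases k with _ | k
  · simp [wd]
  · simp only [wd, List.getElem_cons_succ]
    rcases lt_trichotomy k p with h | rfl | h
    · rw [List.getElem_append_left (by simpa using h)]
      simp [hab.symm]; omega
    · simp
    · rw [List.getElem_append_right (by simpa using h.le)]
      obtain ⟨m, rfl⟩ : ∃ m, k = p + m + 1 := ⟨k - p - 1, by omega⟩
      simp [show p + m + 1 - p = m + 1 by omega, hab.symm]
      omega

theorem wd_primitive {a b : α} (hab : a ≠ b) (p q : ℕ) (hpq : p < q) :
    Primitive (wd a b p q) := by
  have main : ∀ i j, i < j → j < (wd a b p q).length →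
      (wd a b p q).rotate i = (wd a b p q).rotate j → False := by
    intro i j hij hj h
    obtain ⟨d, rfl⟩ : ∃ d, j = d + i := ⟨j - i, by omega⟩
    rw [← List.rotate_rotate] at h
    have h' := List.rotate_injective i h
    have hl := wd_length a b p q
    have step : ∀ k (hk : k < (wd a b p q).length), (k = 0 ∨ k = p + 1) →
        ((k + d) % (p + q + 2) = 0 ∨ (k + d) % (p + q + 2) = p + 1) := by
      intro k hk hk0
      have e1 := (wd_get hab p q k hk).2 hk0
      have e2 : ((wd a b p q).rotate d)[k]'(by simpa using hk) = a := by
        refine Eq.trans ?_ e1; congr 1; exact h'.symm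
      rw [List.getElem_rotate, wd_get hab] at e2
      rwa [hl] at e2
    have s0 := step 0 (by omega) (Or.inl rfl)
    rw [Nat.mod_eq_of_lt (by omega)] at s0
    have s1 := step (p + 1) (by omega) (Or.inr rfl)
    rw [Nat.mod_eq_of_lt (by omega)] at s1
    omega
  intro i j hi hj h
  rcases lt_trichotomy i j with h' | h' | h'
  · exact (main i j h' hj h).elim
  · exact h'
  · exact (main j i h' hi h.symm).elim

theorem wd_rot1 (a b : α) (p q : ℕ) : (wd a b p q).rotate 1 =
    (List.replicate p b ++ a :: List.replicate q b) ++ [a] := by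
  simp [wd]

theorem wd_rot2 (a b : α) (p q : ℕ) : (wd a b p q).rotate (p + 2) =
    (List.replicate q b ++ a :: List.replicate p b) ++ [a] := by
  have h : wd a b p q = (a :: (List.replicate p b ++ [a])) ++ List.replicate q b := by
    simp [wd]
  have hl : (a :: (List.replicate p b ++ [a])).length = p + 2 := by simp
  rw [h, ← hl, List.rotate_append_length_eq]
  simp

theorem wd_count [DecidableEq α] (a b c : α) (p q : ℕ) :
    (wd a b p q).count c = (List.replicate (p + q) b).count c + 2 * [a].count c := by
  simp [wd, List.count_cons, List.count_append, List.count_replicate]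
  split_ifs <;> omega

theorem wd_cmp {σ : ℕ → α → α → Prop} (a b : α) (p s : ℕ) (x y : List α) (d : ℕ) :
    (σ (d + p) a b → KLt σ d ((List.replicate p b ++ a :: x))
      ((List.replicate (p + (s + 1)) b ++ y))) ∧
    (σ (d + p) b a → KLt σ d ((List.replicate (p + (s + 1)) b ++ y))
      ((List.replicate p b ++ a :: x))) := by
  rw [List.replicate_add, List.append_assoc, List.replicate_succ, List.cons_append]
  exact ⟨fun h => KLt_replicate _ _ _ _ _ (Or.inl h),
    fun h => KLt_replicate _ _ _ _ _ (Or.inl h)⟩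

/-- for a finite alphabet with at least two symbols and a tuple
`K = (π 0, …, π (k-1))` with `π 0 = Id`, if `K` contains a triplet
`(Id, Rev, π)` with `π ≠ Id` (i.e. `π i = Id`, `π (i+1) = Rev`,
`π (i+2) ≠ Id` for some `i ≤ k−3`), then `BWT_K` is not rank-invertible. -/
theorem bwtK_triplet_id_rev_not_rank_invertible [LinearOrder α] [Fintype α]
    (hcard : 2 ≤ Fintype.card α)
    (k : ℕ) (hk : 0 < k) (π : Fin k → α → α → Prop)
    (horder : ∀ t, IsStrictTotalOrder α (π t))
    (h0 : π ⟨0, hk⟩ = fun a b : α => a < b)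
    (i : ℕ) (hik : i + 2 < k)
    (hi : π ⟨i, by omega⟩ = fun a b : α => a < b)
    (hi1 : π ⟨i + 1, by omega⟩ = fun a b : α => b < a)
    (hi2 : π ⟨i + 2, hik⟩ ≠ fun a b : α => a < b) :
    ¬ RankInvertible (fun d => π ⟨d % k, Nat.mod_lt d hk⟩) := by
  rintro ⟨f, hf⟩
  obtain ⟨a, b, hab, hba⟩ : ∃ a b : α, a < b ∧ π ⟨i + 2, hik⟩ b a := by
    by_contra hcon
    push Not at hcon
    apply hi2
    have := horder ⟨i + 2, hik⟩
    funext x y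
    apply propext
    constructor
    · intro h
      rcases lt_trichotomy x y with h' | rfl | h'
      · exact h'
      · exact (irrefl_of _ _ h).elim
      · exact (hcon _ _ h' h).elim
    · intro h
      rcases trichotomous_of (π ⟨i + 2, hik⟩) x y with h' | rfl | h'
      · exact h'
      · exact (lt_irrefl _ h).elim
      · exact (hcon _ _ h h').elim
  have hne : a ≠ b := hab.ne
  set σ : ℕ → α → α → Prop := fun d => π ⟨d % k, Nat.mod_lt d hk⟩ with hσd
  have hσ : ∀ d, IsStrictTotalOrder α (σ d) := fun d => horder _
  have s0 : σ i a b := by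
    have : σ i = fun a b : α => a < b := by
      rw [← hi]; simp only [hσd, Nat.mod_eq_of_lt (show i < k by omega)]
    rw [this]; exact hab
  have s1 : σ (i + 1) b a := by
    have : σ (i + 1) = fun a b : α => b < a := by
      rw [← hi1]; simp only [hσd, Nat.mod_eq_of_lt (show i + 1 < k by omega)]
    rw [this]; exact hab
  have s2 : σ (i + 2) b a := by
    simp only [hσd, Nat.mod_eq_of_lt hik]; exact hba
  have cnt : ∀ p q, (wd a b p q).count a = 2 := by
    intro p q
    rw [wd_count]
    simp [List.count_replicate, hne.symm]
  have A := (key hσ f hf (wd a b i (i + (2 + 1))) (wd_primitive hne _ _ (by omega)) a (cnt _ _)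
    _ _ 1 (i + 2) (by rw [wd_length]; omega) (by rw [wd_length]; omega)
    (wd_rot1 _ _ _ _) (wd_rot2 _ _ _ _)
    (by
      rw [List.append_assoc, List.append_assoc, List.cons_append]
      exact (wd_cmp a b i 2 _ _ 0).1 (by simpa using s0))).2
    (Or.inr ⟨rfl, (wd_cmp a b i 2 _ _ 1).2 (by rwa [Nat.add_comm])⟩)
  have B := (key hσ f hf (wd a b (i + 1) (i + 1 + (0 + 1))) (wd_primitive hne _ _ (by omega)) a
    (cnt _ _)
    _ _ (i + 1 + 2) 1 (by rw [wd_length]; omega) (by rw [wd_length]; omega)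
    (wd_rot2 _ _ _ _) (wd_rot1 _ _ _ _)
    (by
      rw [List.append_assoc, List.append_assoc, List.cons_append]
      exact (wd_cmp a b (i + 1) 0 _ _ 0).2 (by simpa using s1))).1
    (Or.inr ⟨rfl, (wd_cmp a b (i + 1) 0 _ _ 1).2 (by rwa [show 1 + (i + 1) = i + 2 by omega])⟩)
  have E : (fun c => (wd a b i (i + (2 + 1))).count c)
      = fun c => (wd a b (i + 1) (i + 1 + (0 + 1))).count c := by
    funext c
    rw [wd_count, wd_count, show i + (i + (2 + 1)) = i + 1 + (i + 1 + (0 + 1)) by omega]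
  rw [E] at A
  exact lt_asymm A B

end Paper
end

section
/- If w is a Galois word over a linearly ordered alphabet and u is a border of w (a nonempty proper factor of w that is both a prefix and a suffix of w), then the length of u is odd. -/
namespace Paper

variable {α : Type*}

/-- Extended alternating lexicographic strict order; the flag `b` is `true`
when the current position index is even. -/
def altLtAux [LinearOrder α] : Bool → List α → List α → Prop
  | _, [], [] => False
  | b, [], _ :: _ => b = true
  | b, _ :: _, [] => b = false
  | b, c :: x, d :: y => (if b then c < d else d < c) ∨ (c = d ∧ altLtAux (!b) x y)

/-- The alternating lexicographic strict order (positions indexed from 0). -/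
def AltLt [LinearOrder α] (x y : List α) : Prop := altLtAux true x y

/-- The reflexive alternating lexicographic order. -/
def AltLe [LinearOrder α] (x y : List α) : Prop := x = y ∨ AltLt x y

/-- A primitive word `w` is a Galois word if `w ≼_alt vu` for every nontrivial
factorization `w = uv`. -/
def IsGalois [LinearOrder α] (w : List α) : Prop :=
  Primitive w ∧ ∀ u v : List α, w = u ++ v → u ≠ [] → v ≠ [] → AltLe w (v ++ u)

theorem altLtAux_irrefl [LinearOrder α] : ∀ (b : Bool) (x : List α), ¬ altLtAux b x x
  | _, [] => by simp [altLtAux]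
  | b, c :: x => by
    have := altLtAux_irrefl (!b) x
    cases b <;> simp_all [altLtAux]

theorem altLtAux_asymm [LinearOrder α] :
    ∀ (b : Bool) (x y : List α), altLtAux b x y → ¬ altLtAux b y x
  | _, [], [] => by simp [altLtAux]
  | b, [], _ :: _ => by cases b <;> simp [altLtAux]
  | b, _ :: _, [] => by cases b <;> simp [altLtAux]
  | b, c :: x, d :: y => by
    have ih := altLtAux_asymm (!b) x y
    intro h h'
    cases b <;> simp only [altLtAux, Bool.not_false, Bool.not_true, if_true, if_false,
      Bool.false_eq_true] at h h' ih
    all_goals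
      rcases h with h | ⟨h, h2⟩ <;> rcases h' with h' | ⟨h', h2'⟩
      · exact lt_asymm h h'
      · subst h'; exact lt_irrefl _ h
      · subst h; exact lt_irrefl _ h'
      · exact ih h2 h2'

theorem altLtAux_append_right [LinearOrder α] (z : List α) :
    ∀ (b : Bool) (x y : List α), x.length = y.length → altLtAux b x y →
      altLtAux b (x ++ z) (y ++ z)
  | _, [], [] => by simp [altLtAux]
  | b, [], _ :: _ => by simp
  | b, _ :: _, [] => by simp
  | b, c :: x, d :: y => by
    intro hl h
    have ih := altLtAux_append_right z (!b) x y (by simpa using hl)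
    simp only [List.cons_append, altLtAux] at h ⊢
    exact h.imp id (fun h => ⟨h.1, ih h.2⟩)

theorem altLtAux_of_append_left [LinearOrder α] (x y : List α) :
    ∀ (b : Bool) (u : List α), altLtAux b (u ++ x) (u ++ y) →
      altLtAux (if Even u.length then b else !b) x y
  | b, [] => by simp
  | b, c :: u => by
    intro h
    have ih := altLtAux_of_append_left x y (!b) u
    have h2 : altLtAux (!b) (u ++ x) (u ++ y) := by
      cases b <;> simpa [altLtAux] using h
    have h3 := ih h2
    by_cases he : Even u.length <;> simp_all [Nat.even_add_one]

/-- every border of a Galois word (a nonempty proper factor that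
is both a prefix and a suffix) has odd length. -/
theorem galois_border_odd_length [LinearOrder α] (w u : List α)
    (hG : IsGalois w) (hu : u ≠ []) (hlen : u.length < w.length)
    (hpre : u <+: w) (hsuf : u <:+ w) :
    Odd u.length := by
  by_contra hodd
  have hev : Even u.length := Nat.not_odd_iff_even.mp hodd
  obtain ⟨v, hv⟩ := hpre
  obtain ⟨v', hv'⟩ := hsuf
  have hl : v.length = v'.length := by
    have h1 := congrArg List.length hv
    have h2 := congrArg List.length hv'
    simp only [List.length_append] at h1 h2
    omega
  have hvn : v ≠ [] := by
    rintro rfl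
    simp at hv
    subst hv
    exact lt_irrefl _ hlen
  have hvn' : v' ≠ [] := by
    rintro rfl
    simp at hl
    exact hvn hl
  obtain ⟨hP, hR⟩ := hG
  have hpos : 0 < u.length := List.length_pos_iff.mpr hu
  have hne : v ≠ v' := by
    rintro rfl
    have hr : w.rotate u.length = w.rotate 0 := by
      rw [List.rotate_zero, ← hv, List.rotate_append_length_eq, hv', hv]
    have := hP _ _ hlen (by omega) hr
    omega
  have hlt : altLtAux true v v' := by
    rcases hR v' u hv'.symm hvn' hu with h | h
    · rw [← hv] at h
      exact absurd (List.append_cancel_left h) hne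
    · rw [← hv] at h
      have := altLtAux_of_append_left v v' true u h
      simpa [hev] using this
  have h1 := altLtAux_append_right u true v v' hl hlt
  rw [hv'] at h1
  rcases hR u v hv.symm hu hvn with h | h
  · rw [← h] at h1
    exact altLtAux_irrefl _ _ h1
  · exact altLtAux_asymm _ _ _ h h1

end Paper
end
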